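/- For every integer q > 2, the ratio E(G_{q²})/E₀ satisfies E(G_{q²})/E₀ ≤ (4q² − 2q)/((q² − q − 1)√(q+1)); in particular, this ratio tends to 0 as q → ∞. -/

import Mathlib

/-!
The graph `gGraph q` is the box product `C_q □ K_q`, so its eigenvalues are the sums `λ + μ` of an
eigenvalue `λ` of the cycle and an eigenvalue `μ` of the complete graph. The triangle inequality
`|λ + μ| ≤ |λ| + |μ|` therefore bounds its energy by `q E(C_q) + q E(K_q)`. The eigenvalues of the
`2`-regular cycle lie in `[-2, 2]` by Gershgorin, so `E(C_q) ≤ 2q`, while those of `K_q` are `q - 1`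
once and `-1` with multiplicity `q - 1`, so `E(K_q) = 2(q - 1)`; in total this is `4q² - 2q`.
-/

/-- The adjacency matrix of a simple graph over `ℝ` is Hermitian. -/
theorem SimpleGraph.adjMatrix_isHermitian {V : Type*} [Fintype V] (G : SimpleGraph V)
    [DecidableRel G.Adj] : (G.adjMatrix ℝ).IsHermitian := by
  rw [Matrix.IsHermitian, Matrix.conjTranspose_eq_transpose_of_trivial]
  exact SimpleGraph.isSymm_adjMatrix G

/-- The eigenvalues of the (real, symmetric) adjacency matrix of a simple graph,
indexed by the vertex set (listed with multiplicity). -/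
noncomputable def SimpleGraph.adjEigenvalues {V : Type*} [Fintype V] [DecidableEq V]
    (G : SimpleGraph V) : V → ℝ :=
  letI := Classical.decRel G.Adj
  (G.adjMatrix_isHermitian).eigenvalues

/-- The energy of a simple graph: the sum of the absolute values of the
eigenvalues of its adjacency matrix. -/
noncomputable def SimpleGraph.energy {V : Type*} [Fintype V] [DecidableEq V]
    (G : SimpleGraph V) : ℝ :=
  ∑ v, |G.adjEigenvalues v|

/-- The graph `G_{q²}` : `q` disjoint copies of the complete graph `K_q`
(the copies indexed by the first coordinate, a residue `i` mod `q`), together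
with, for each label `j`, the edges of a `q`-cycle joining `v_j[i]` and
`v_j[i ± 1 mod q]`.  Thus `(i, j)` is adjacent to `(i', j')` iff
(`i = i'` and `j ≠ j'`) or (`j = j'` and `i' = i ± 1 (mod q)`). -/
def gGraph (q : ℕ) : SimpleGraph (Fin q × Fin q) :=
  SimpleGraph.fromRel fun a b =>
    (a.1 = b.1 ∧ a.2 ≠ b.2) ∨ (a.2 = b.2 ∧ (b.1 : ℕ) = ((a.1 : ℕ) + 1) % q)

instance gGraph.instDecidableRelAdj (q : ℕ) : DecidableRel (gGraph q).Adj := fun a b =>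
  decidable_of_iff _ (SimpleGraph.fromRel_adj _ a b).symm

/-- `E₀ = k + √(k(n-1)(n-k))` evaluated for the `(q+1)`-regular graph `G_{q²}`
on `n = q²` vertices, i.e. `E₀ = (q+1) + √((q+1)(q²-1)(q²-q-1))`. -/
noncomputable def gE0 (q : ℕ) : ℝ :=
  ((q : ℝ) + 1) + Real.sqrt (((q : ℝ) + 1) * ((q : ℝ) ^ 2 - 1) * ((q : ℝ) ^ 2 - (q : ℝ) - 1))

section KroneckerSum

open Matrix Polynomial
open scoped Kronecker

theorem charpoly_kroneckerSum {𝕜 m n : Type*} [RCLike 𝕜] [Fintype m] [DecidableEq m]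
    [Fintype n] [DecidableEq n] {A : Matrix m m 𝕜} {B : Matrix n n 𝕜}
    (hA : A.IsHermitian) (hB : B.IsHermitian) :
    (A ⊗ₖ (1 : Matrix n n 𝕜) + (1 : Matrix m m 𝕜) ⊗ₖ B).charpoly =
      ∏ p : m × n, (X - C ((hA.eigenvalues p.1 : 𝕜) + (hB.eigenvalues p.2 : 𝕜))) := by
  set U : Matrix m m 𝕜 := hA.eigenvectorUnitary.val
  set V : Matrix n n 𝕜 := hB.eigenvectorUnitary.val
  set D : Matrix m m 𝕜 := diagonal (RCLike.ofReal ∘ hA.eigenvalues)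
  set E : Matrix n n 𝕜 := diagonal (RCLike.ofReal ∘ hB.eigenvalues)
  have hU : U * star U = 1 := Unitary.coe_mul_star_self _
  have hU' : star U * U = 1 := Unitary.coe_star_mul_self _
  have hV : V * star V = 1 := Unitary.coe_mul_star_self _
  have hV' : star V * V = 1 := Unitary.coe_star_mul_self _
  have hAU : A = U * D * star U := hA.spectral_theorem
  have hBV : B = V * E * star V := hB.spectral_theorem
  have diagonalization : A ⊗ₖ (1 : Matrix n n 𝕜) + (1 : Matrix m m 𝕜) ⊗ₖ B =
      (U ⊗ₖ V) * (D ⊗ₖ 1 + 1 ⊗ₖ E) * (star U ⊗ₖ star V) := by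
    simp only [mul_add, add_mul, ← mul_kronecker_mul, mul_one, hU, hV, ← hAU, ← hBV]
  have diagonal_sum : D ⊗ₖ (1 : Matrix n n 𝕜) + (1 : Matrix m m 𝕜) ⊗ₖ E =
      diagonal fun p : m × n ↦ (hA.eigenvalues p.1 : 𝕜) + (hB.eigenvalues p.2 : 𝕜) := by
    simp only [D, E, ← diagonal_one, diagonal_kronecker_diagonal, diagonal_add, mul_one, one_mul,
      Function.comp_apply]
  rw [diagonalization, charpoly_mul_comm, ← mul_assoc, ← mul_kronecker_mul, hU', hV',
    one_kronecker_one, one_mul, diagonal_sum, charpoly_diagonal]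

end KroneckerSum

section Energy

open Matrix Polynomial SimpleGraph
open scoped Kronecker

variable {V W : Type*} [DecidableEq V] [DecidableEq W]

theorem adjMatrix_boxProd (R : Type*) [NonAssocSemiring R] (G : SimpleGraph V)
    (H : SimpleGraph W) [DecidableRel G.Adj] [DecidableRel H.Adj] [DecidableRel (G □ H).Adj] :
    (G □ H).adjMatrix R =
      G.adjMatrix R ⊗ₖ (1 : Matrix W W R) + (1 : Matrix V V R) ⊗ₖ H.adjMatrix R := by
  ext ⟨v, w⟩ ⟨v', w'⟩
  by_cases hv : v = v' <;> by_cases hw : w = w' <;>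
    simp [adjMatrix_apply, one_apply, hv, hw]

variable [Fintype V] [Fintype W]

theorem adjEigenvalues_eq_eigenvalues (G : SimpleGraph V) [DecidableRel G.Adj] :
    G.adjEigenvalues = G.adjMatrix_isHermitian.eigenvalues := by
  unfold SimpleGraph.adjEigenvalues
  congr!

theorem energy_eq_sum_abs_roots_charpoly (G : SimpleGraph V) [DecidableRel G.Adj] :
    G.energy = ((G.adjMatrix ℝ).charpoly.roots.map abs).sum := by
  rw [G.adjMatrix_isHermitian.roots_charpoly_eq_eigenvalues, Multiset.map_map,
    ← adjEigenvalues_eq_eigenvalues]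
  rfl

theorem energy_nonneg (G : SimpleGraph V) : 0 ≤ G.energy :=
  Finset.sum_nonneg fun _ _ ↦ abs_nonneg _

theorem norm_le_maxDegree_of_hasEigenvalue {K : Type*} [NormedField K] (G : SimpleGraph V)
    [DecidableRel G.Adj] {μ : K} (hμ : Module.End.HasEigenvalue (toLin' (G.adjMatrix K)) μ) :
    ‖μ‖ ≤ G.maxDegree := by
  obtain ⟨v, hv⟩ := eigenvalue_mem_ball hμ
  have row_sum : ∑ w ∈ Finset.univ.erase v, ‖G.adjMatrix K v w‖ = G.degree v := by
    rw [Finset.sum_erase _ (by simp)]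
    simp [adjMatrix_apply, apply_ite norm, ← card_neighborFinset_eq_degree,
      neighborFinset_eq_filter]
  rw [row_sum, mem_closedBall_iff_norm, adjMatrix_apply, if_neg (G.loopless.irrefl v),
    sub_zero] at hv
  exact hv.trans (mod_cast G.degree_le_maxDegree v)

theorem energy_le_card_mul_maxDegree (G : SimpleGraph V) [DecidableRel G.Adj] :
    G.energy ≤ Fintype.card V * G.maxDegree := by
  have abs_root_le : ∀ μ ∈ (G.adjMatrix ℝ).charpoly.roots, |μ| ≤ G.maxDegree := fun μ hμ ↦ by
    refine norm_le_maxDegree_of_hasEigenvalue (K := ℝ) G ?_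
    rw [Module.End.hasEigenvalue_iff_isRoot_charpoly, charpoly_toLin']
    exact isRoot_of_mem_roots hμ
  calc G.energy
      = ((G.adjMatrix ℝ).charpoly.roots.map abs).sum := energy_eq_sum_abs_roots_charpoly G
    _ ≤ (G.adjMatrix ℝ).charpoly.roots.card • (G.maxDegree : ℝ) := by
        simpa using Multiset.sum_le_card_nsmul ((G.adjMatrix ℝ).charpoly.roots.map abs) _
          (Multiset.forall_mem_map_iff.2 abs_root_le)
    _ ≤ Fintype.card V * G.maxDegree := by
        rw [nsmul_eq_mul]
        gcongr
        exact (card_roots' _).trans (charpoly_natDegree_eq_dim _).le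

theorem energy_boxProd (G : SimpleGraph V) (H : SimpleGraph W) :
    (G □ H).energy = ∑ v, ∑ w, |G.adjEigenvalues v + H.adjEigenvalues w| := by
  classical
  rw [energy_eq_sum_abs_roots_charpoly, adjMatrix_boxProd,
    charpoly_kroneckerSum G.adjMatrix_isHermitian H.adjMatrix_isHermitian,
    roots_prod _ _ (Finset.prod_ne_zero_iff.2 fun _ _ ↦ X_sub_C_ne_zero _)]
  simp only [roots_X_sub_C, Multiset.bind_singleton, Multiset.map_map]
  rw [← Fintype.sum_prod_type', adjEigenvalues_eq_eigenvalues, adjEigenvalues_eq_eigenvalues]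
  rfl

theorem energy_boxProd_le (G : SimpleGraph V) (H : SimpleGraph W) :
    (G □ H).energy ≤ Fintype.card W * G.energy + Fintype.card V * H.energy :=
  calc (G □ H).energy
      = ∑ v, ∑ w, |G.adjEigenvalues v + H.adjEigenvalues w| := energy_boxProd G H
    _ ≤ ∑ v, ∑ w, (|G.adjEigenvalues v| + |H.adjEigenvalues w|) := by
        gcongr
        exact abs_add_le _ _
    _ = Fintype.card W * G.energy + Fintype.card V * H.energy := by
        simp [SimpleGraph.energy, Finset.sum_add_distrib, Finset.mul_sum]

theorem charpoly_adjMatrix_top (R : Type*) [CommRing R] [Nonempty V] :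
    ((⊤ : SimpleGraph V).adjMatrix R).charpoly =
      (X - C (-1)) ^ (Fintype.card V - 1) * (X - C ((Fintype.card V : R) - 1)) := by
  have rank_one_sub_one : (⊤ : SimpleGraph V).adjMatrix R = vecMulVec 1 1 - scalar V 1 := by
    ext v w
    by_cases h : v = w <;> simp [h]
  obtain ⟨n, hn⟩ : ∃ n, Fintype.card V = n + 1 :=
    Nat.exists_eq_succ_of_ne_zero Fintype.card_ne_zero
  rw [rank_one_sub_one, charpoly_sub_scalar, charpoly_vecMulVec]
  simp only [hn, one_dotProduct_one, Nat.cast_add, Nat.cast_one, add_tsub_cancel_right,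
    smul_eq_C_mul, map_add, map_natCast, map_one, sub_comp, pow_comp, X_comp, mul_comp, add_comp,
    natCast_comp, one_comp, map_neg, sub_neg_eq_add, add_sub_cancel_right]
  ring

theorem energy_top [Nonempty V] :
    (⊤ : SimpleGraph V).energy = 2 * ((Fintype.card V : ℝ) - 1) := by
  have card_pos : 1 ≤ Fintype.card V := Fintype.card_pos
  have card_sub_one_nonneg : 0 ≤ (Fintype.card V : ℝ) - 1 := sub_nonneg.2 (mod_cast card_pos)
  rw [energy_eq_sum_abs_roots_charpoly, charpoly_adjMatrix_top, roots_mul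
    (mul_ne_zero (pow_ne_zero _ (X_sub_C_ne_zero _)) (X_sub_C_ne_zero _)), roots_pow,
    roots_X_sub_C, roots_X_sub_C]
  simp only [Multiset.map_add, Multiset.map_nsmul, Multiset.map_singleton, abs_neg, abs_one,
    abs_of_nonneg card_sub_one_nonneg, Multiset.sum_add, Multiset.sum_nsmul,
    Multiset.sum_singleton, nsmul_eq_mul, Nat.cast_sub card_pos, Nat.cast_one, mul_one]
  ring

theorem maxDegree_cycleGraph_le (n : ℕ) : (cycleGraph n).maxDegree ≤ 2 := by
  refine maxDegree_le_of_forall_degree_le _ _ fun v ↦ ?_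
  obtain hn | hn := Nat.lt_or_ge n 3
  · have := (cycleGraph n).degree_lt_card_verts v
    rw [Fintype.card_fin] at this
    omega
  · obtain ⟨m, rfl⟩ := Nat.exists_eq_add_of_le' hn
    exact cycleGraph_degree_three_le.le

theorem energy_cycleGraph_le (n : ℕ) : (cycleGraph n).energy ≤ 2 * n :=
  calc (cycleGraph n).energy
      ≤ Fintype.card (Fin n) * (cycleGraph n).maxDegree := energy_le_card_mul_maxDegree _
    _ ≤ n * 2 := by
        rw [Fintype.card_fin]
        gcongr
        exact_mod_cast maxDegree_cycleGraph_le n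
    _ = 2 * n := mul_comm _ _

theorem cycleGraph_adj_iff_val_eq_add_one_mod {n : ℕ} {u v : Fin n} :
    (cycleGraph n).Adj u v ↔
      u ≠ v ∧ ((v : ℕ) = ((u : ℕ) + 1) % n ∨ (u : ℕ) = ((v : ℕ) + 1) % n) := by
  match n with
  | 0 => exact u.elim0
  | 1 => simp [Subsingleton.elim u v]
  | n + 2 =>
    have val_eq_iff (a b : Fin (n + 2)) : (b : ℕ) = ((a : ℕ) + 1) % (n + 2) ↔ b - a = 1 := by
      rw [sub_eq_iff_eq_add', Fin.ext_iff, Fin.val_add, Fin.val_one]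
    rw [val_eq_iff, val_eq_iff, cycleGraph_adj, or_comm, iff_and_self]
    rintro h rfl
    simp at h

theorem gGraph_eq_boxProd (q : ℕ) : gGraph q = cycleGraph q □ ⊤ := by
  ext ⟨i, j⟩ ⟨i', j'⟩
  simp only [gGraph, fromRel_adj, boxProd_adj, cycleGraph_adj_iff_val_eq_add_one_mod, top_adj,
    ne_eq, Prod.mk.injEq]
  grind

theorem energy_gGraph_le (q : ℕ) [NeZero q] :
    (gGraph q).energy ≤ 4 * (q : ℝ) ^ 2 - 2 * (q : ℝ) :=
  calc (gGraph q).energy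
      ≤ q * (cycleGraph q).energy + q * (⊤ : SimpleGraph (Fin q)).energy := by
        simpa [gGraph_eq_boxProd] using energy_boxProd_le (cycleGraph q) (⊤ : SimpleGraph (Fin q))
    _ ≤ q * (2 * q) + q * (2 * (q - 1)) := by
        rw [energy_top, Fintype.card_fin]
        gcongr
        exact energy_cycleGraph_le q
    _ = 4 * (q : ℝ) ^ 2 - 2 * (q : ℝ) := by ring

end Energy

section Asymptotics

theorem sq_sub_sub_one_pos {x : ℝ} (hx : 2 ≤ x) : 0 < x ^ 2 - x - 1 := by
  nlinarith

theorem gE0_nonneg (q : ℕ) : 0 ≤ gE0 q := by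
  unfold gE0
  positivity

theorem mul_sqrt_le_gE0 {q : ℕ} (hq : 2 ≤ q) :
    ((q : ℝ) ^ 2 - q - 1) * √((q : ℝ) + 1) ≤ gE0 q := by
  have hpos : 0 < (q : ℝ) ^ 2 - q - 1 := sq_sub_sub_one_pos (mod_cast hq)
  calc ((q : ℝ) ^ 2 - q - 1) * √((q : ℝ) + 1)
      = √((q + 1) * ((q : ℝ) ^ 2 - q - 1) * ((q : ℝ) ^ 2 - q - 1)) := by
        rw [mul_assoc, ← sq, Real.sqrt_mul (by positivity), Real.sqrt_sq hpos.le, mul_comm]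
    _ ≤ √((q + 1) * ((q : ℝ) ^ 2 - 1) * ((q : ℝ) ^ 2 - q - 1)) := by
        gcongr
        linarith [q.cast_nonneg (α := ℝ)]
    _ ≤ gE0 q := le_add_of_nonneg_left (by positivity)

theorem div_mul_sqrt_le_six_div_sqrt {x : ℝ} (hx : 3 ≤ x) :
    (4 * x ^ 2 - 2 * x) / ((x ^ 2 - x - 1) * √(x + 1)) ≤ 6 / √(x + 1) := by
  rw [← div_div]
  gcongr
  rw [div_le_iff₀ (sq_sub_sub_one_pos (by linarith))]
  nlinarith

theorem tendsto_const_div_sqrt_natCast_add_one (c : ℝ) :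
    Filter.Tendsto (fun n : ℕ ↦ c / √((n : ℝ) + 1)) Filter.atTop (nhds 0) :=
  (Real.tendsto_sqrt_atTop.comp
    (Filter.tendsto_atTop_add_const_right _ 1 tendsto_natCast_atTop_atTop)).const_div_atTop c

end Asymptotics

/-- For every integer `q > 2`, `E(G_{q²})/E₀ ≤ (4q² - 2q)/((q² - q - 1)√(q+1))`;
in particular this ratio tends to `0` as `q → ∞`. -/
theorem energy_gGraph_ratio_le :
    (∀ q : ℕ, 2 < q →
      (gGraph q).energy / gE0 q ≤
        (4 * (q : ℝ) ^ 2 - 2 * (q : ℝ)) /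
          (((q : ℝ) ^ 2 - (q : ℝ) - 1) * Real.sqrt ((q : ℝ) + 1))) ∧
    Filter.Tendsto (fun q : ℕ => (gGraph q).energy / gE0 q) Filter.atTop (nhds 0) := by
  have ratio_le (q : ℕ) (hq : 2 < q) : (gGraph q).energy / gE0 q ≤
      (4 * (q : ℝ) ^ 2 - 2 * q) / (((q : ℝ) ^ 2 - q - 1) * √((q : ℝ) + 1)) := by
    have : NeZero q := ⟨by omega⟩
    have hpos : 0 < (q : ℝ) ^ 2 - q - 1 := sq_sub_sub_one_pos (mod_cast hq.le)
    exact div_le_div₀ ((energy_nonneg _).trans (energy_gGraph_le q)) (energy_gGraph_le q)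
      (by positivity) (mul_sqrt_le_gE0 hq.le)
  refine ⟨ratio_le, squeeze_zero' (.of_forall fun q ↦ div_nonneg (energy_nonneg _) (gE0_nonneg q))
    ?_ (tendsto_const_div_sqrt_natCast_add_one 6)⟩
  filter_upwards [Filter.eventually_gt_atTop 2] with q hq
  exact (ratio_le q hq).trans (div_mul_sqrt_le_six_div_sqrt (mod_cast hq))
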